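/- Let O ∈ ℝ^{m×n}, let S ⊆ {1,…,m} with |S| = h and complement S̄, and suppose O_{S̄} ∈ ℝ^{(m−h)×n} has full column rank. Let x̃ ∈ ℝⁿ and set y_{S̄} = O_{S̄} x̃ ∈ ℝ^{m−h}. Then ‖O_S x̃‖₁ ≤ ρ ‖y_{S̄}‖₁, where ρ = ‖O_{S̄}^{†⊤} O_Sᵀ‖_∞. -/

import Mathlib

/-!
Write `A = O_{S̄} (O_{S̄}ᵀ O_{S̄})⁻¹ O_Sᵀ`. Full column rank makes the Gram matrix `O_{S̄}ᵀ O_{S̄}`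
invertible, so `Aᵀ O_{S̄} = O_S` and hence `O_S x̃ = Aᵀ y_{S̄}`. The bound is then the inequality
`‖Aᵀ y‖₁ ≤ ‖A‖_∞ ‖y‖₁`, which follows from the triangle inequality and an exchange of sums.
-/

open Matrix BigOperators

/-- The `ℓ1` operator norm of `Aᵀ` is at most the maximal absolute row sum of `A`. -/
lemma sum_abs_transpose_mulVec_le {ι κ : Type*} [Fintype ι] [Fintype κ]
    (A : Matrix κ ι ℝ) (y : κ → ℝ) :
    ∑ i, |(Aᵀ *ᵥ y) i| ≤ (⨆ j, ∑ i, |A j i|) * ∑ j, |y j| := by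
  calc ∑ i, |(Aᵀ *ᵥ y) i| ≤ ∑ i, ∑ j, |A j i| * |y j| := by
        refine Finset.sum_le_sum fun i _ => ?_
        simp only [mulVec, dotProduct, transpose_apply, ← abs_mul]
        exact Finset.abs_sum_le_sum_abs _ _
    _ = ∑ j, (∑ i, |A j i|) * |y j| := by
        rw [Finset.sum_comm]
        simp only [Finset.sum_mul]
    _ ≤ ∑ j, (⨆ j, ∑ i, |A j i|) * |y j| := by
        refine Finset.sum_le_sum fun j _ => mul_le_mul_of_nonneg_right ?_ (abs_nonneg _)
        exact le_ciSup (f := fun j => ∑ i, |A j i|) (Set.finite_range _).bddAbove j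
    _ = _ := by rw [Finset.mul_sum]

/-- The Gram matrix of a real matrix of full column rank is invertible. -/
lemma isUnit_transpose_mul_self_of_rank {κ : Type*} [Fintype κ] {n : ℕ}
    (B : Matrix κ (Fin n) ℝ) (h : B.rank = n) : IsUnit (Bᵀ * B) := by
  rw [← mulVec_surjective_iff_isUnit]
  have hr : (Bᵀ * B).rank = n := by rw [rank_transpose_mul_self, h]
  have ht : LinearMap.range (Bᵀ * B).mulVecLin = ⊤ :=
    Submodule.eq_top_of_finrank_eq (by simpa [Matrix.rank] using hr)
  exact LinearMap.range_eq_top.mp ht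

/-- The irrepresentable term `ρ = ‖O_{S̄}^{†⊤} O_Sᵀ‖_∞` bounds the "exposure" of the
attacked rows: `‖O_S x̃‖₁ ≤ ρ ‖y_{S̄}‖₁` where `y_{S̄} = O_{S̄} x̃`. -/
theorem l1_bound_via_irrepresentable_term
    (m n : ℕ) (O : Matrix (Fin m) (Fin n) ℝ) (S : Finset (Fin m))
    -- the rows of `O` indexed by `S` and by its complement
    (OS : Matrix ↥S (Fin n) ℝ)
    (hOS : OS = O.submatrix (fun i : ↥S => (i : Fin m)) id)
    (OSc : Matrix {i : Fin m // i ∉ S} (Fin n) ℝ)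
    (hOSc : OSc = O.submatrix (fun i : {i : Fin m // i ∉ S} => (i : Fin m)) id)
    -- `O_{S̄}` has full column rank `n`
    (hrankSc : OSc.rank = n)
    (xt : Fin n → ℝ)
    (ySc : {i : Fin m // i ∉ S} → ℝ) (hySc : ySc = OSc *ᵥ xt)
    (ρ : ℝ)
    -- `ρ = ‖O_{S̄}^{†⊤} O_Sᵀ‖_∞`
    (hρ : ρ = ⨆ j : {i : Fin m // i ∉ S}, ∑ i : ↥S, |(OSc * (OScᵀ * OSc)⁻¹ * OSᵀ) j i|) :
    ∑ i : ↥S, |(OS *ᵥ xt) i| ≤ ρ * ∑ j : {i : Fin m // i ∉ S}, |ySc j| := by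
  subst hρ hySc
  clear hOS hOSc
  have hdet : IsUnit (OScᵀ * OSc).det :=
    (isUnit_iff_isUnit_det _).mp (isUnit_transpose_mul_self_of_rank OSc hrankSc)
  have key : (OSc * (OScᵀ * OSc)⁻¹ * OSᵀ)ᵀ * OSc = OS := by
    -- the Gram matrix is symmetric, hence so is its inverse
    have hsymm : ((OScᵀ * OSc)⁻¹)ᵀ = (OScᵀ * OSc)⁻¹ := by
      rw [transpose_nonsing_inv, transpose_mul, transpose_transpose]
    rw [transpose_mul, transpose_mul, hsymm, transpose_transpose, Matrix.mul_assoc,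
      Matrix.mul_assoc, nonsing_inv_mul _ hdet, Matrix.mul_one]
  have h := sum_abs_transpose_mulVec_le (OSc * (OScᵀ * OSc)⁻¹ * OSᵀ) (OSc *ᵥ xt)
  rwa [mulVec_mulVec, key] at h
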